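/- arXiv:1903.12567 — 2 statements merged into one kernel-verified Lean document; each statement's English description precedes it below -/
import Mathlib

section
/- The group G₁₂₀ is isomorphic to the quotient of the direct product B4 × ℤ² by the normal closure of the single element (((σ1*σ2*σ3)^4)⁻¹, u1*u2), where u1, u2 is the standard basis of ℤ² (corresponding to the generators c12, c21) and σ1, σ2, σ3 correspond to a1, b, a2. -/
/-- Braid relations of the braid group `B₄` on generators `σ1 = of 0`, `σ2 = of 1`,
`σ3 = of 2`. -/
def B4rels : Set (FreeGroup (Fin 3)) :=
  {FreeGroup.of 0 * FreeGroup.of 1 * FreeGroup.of 0 *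
      (FreeGroup.of 1 * FreeGroup.of 0 * FreeGroup.of 1)⁻¹,
   FreeGroup.of 1 * FreeGroup.of 2 * FreeGroup.of 1 *
      (FreeGroup.of 2 * FreeGroup.of 1 * FreeGroup.of 2)⁻¹,
   FreeGroup.of 0 * FreeGroup.of 2 * (FreeGroup.of 2 * FreeGroup.of 0)⁻¹}

/-- The braid group on 4 strands, as a presented group. -/
abbrev B4 : Type := PresentedGroup B4rels

namespace G120aux
/-- Generators of the Gervais presentation of `PMod(1,2,0)`:
`b = of 0`, `a1 = of 1`, `a2 = of 2`, `c12 = of 3`, `c21 = of 4`. -/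
def g (i : Fin 5) : FreeGroup (Fin 5) := FreeGroup.of i
/-- The relator expressing that `x` and `y` commute. -/
def comm (x y : FreeGroup (Fin 5)) : FreeGroup (Fin 5) := x * y * (y * x)⁻¹
/-- The relator expressing the braid relation `x y x = y x y`. -/
def braid (x y : FreeGroup (Fin 5)) : FreeGroup (Fin 5) := x * y * x * (y * x * y)⁻¹
end G120aux

open G120aux in
/-- The relations of the Gervais presentation of `PMod(1,2,0)`. -/
def G120rels : Set (FreeGroup (Fin 5)) :=
  {comm (g 1) (g 2), braid (g 1) (g 0), braid (g 2) (g 0),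
   comm (g 3) (g 1), comm (g 3) (g 2), comm (g 3) (g 0),
   comm (g 4) (g 1), comm (g 4) (g 2), comm (g 4) (g 0),
   comm (g 3) (g 4),
   g 3 * g 4 * ((g 1 * g 0 * g 2) ^ 4)⁻¹}

/-- The Gervais presentation of the pure mapping class group `PMod(1,2,0)`. -/
abbrev G120 : Type := PresentedGroup G120rels

/-- The standard basis of the free abelian group `ℤ²` (written multiplicatively). -/
def u (i : Fin 2) : Multiplicative (Fin 2 → ℤ) := Multiplicative.ofAdd (Pi.single i 1)

/-- The normal closure of the single element `(((σ1 σ2 σ3)^4)⁻¹, u₁ u₂)` in `B₄ × ℤ²`. -/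
def N : Subgroup (B4 × Multiplicative (Fin 2 → ℤ)) :=
  Subgroup.normalClosure
    {((((PresentedGroup.of 0 * PresentedGroup.of 1 * PresentedGroup.of 2 : B4) ^ 4)⁻¹),
      u 0 * u 1)}

instance : N.Normal := Subgroup.normalClosure_normal

namespace G120proof

/-- The images of the five generators in the quotient. -/
def img : Fin 5 → (B4 × Multiplicative (Fin 2 → ℤ)) ⧸ N := fun i =>
  QuotientGroup.mk' N (![((PresentedGroup.of 1 : B4), 1), (PresentedGroup.of 0, 1),
    (PresentedGroup.of 2, 1), (1, u 0), (1, u 1)] i)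

theorem eq_of_rel {α : Type} {rels : Set (FreeGroup α)} {x y : FreeGroup α}
    (h : x * y⁻¹ ∈ rels) : PresentedGroup.mk rels x = PresentedGroup.mk rels y := by
  have := PresentedGroup.one_of_mem h
  rw [map_mul, map_inv] at this
  exact mul_inv_eq_one.mp this

theorem B4_01 : (PresentedGroup.of 0 * PresentedGroup.of 1 * PresentedGroup.of 0 : B4)
    = PresentedGroup.of 1 * PresentedGroup.of 0 * PresentedGroup.of 1 :=
  eq_of_rel (rels := B4rels) (x := FreeGroup.of 0 * FreeGroup.of 1 * FreeGroup.of 0) (y := FreeGroup.of 1 * FreeGroup.of 0 * FreeGroup.of 1)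
    (by simp [B4rels])

theorem B4_12 : (PresentedGroup.of 1 * PresentedGroup.of 2 * PresentedGroup.of 1 : B4)
    = PresentedGroup.of 2 * PresentedGroup.of 1 * PresentedGroup.of 2 :=
  eq_of_rel (rels := B4rels) (x := FreeGroup.of 1 * FreeGroup.of 2 * FreeGroup.of 1) (y := FreeGroup.of 2 * FreeGroup.of 1 * FreeGroup.of 2)
    (Or.inr (Or.inl rfl))

theorem B4_02 : (PresentedGroup.of 0 * PresentedGroup.of 2 : B4)
    = PresentedGroup.of 2 * PresentedGroup.of 0 :=
  eq_of_rel (rels := B4rels) (x := FreeGroup.of 0 * FreeGroup.of 2) (y := FreeGroup.of 2 * FreeGroup.of 0)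
    (Or.inr (Or.inr rfl))

theorem star : QuotientGroup.mk' N ((1 : B4), u 0 * u 1) =
    QuotientGroup.mk' N
      ((PresentedGroup.of 0 * PresentedGroup.of 1 * PresentedGroup.of 2 : B4) ^ 4, 1) := by
  symm
  refine (QuotientGroup.eq (s := N)).2 ?_
  have h : ((((PresentedGroup.of 0 * PresentedGroup.of 1 * PresentedGroup.of 2 : B4) ^ 4)⁻¹),
      u 0 * u 1) ∈ N := Subgroup.subset_normalClosure rfl
  simpa using h

theorem img_rels : ∀ r ∈ G120rels, FreeGroup.lift img r = 1 := by
  intro r hr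
  simp only [G120rels, Set.mem_insert_iff, Set.mem_singleton_iff] at hr
  rcases hr with rfl | rfl | rfl | rfl | rfl | rfl | rfl | rfl | rfl | rfl | rfl <;>
    simp only [G120aux.comm, G120aux.braid, G120aux.g, map_mul, map_inv, map_pow,
      FreeGroup.lift_apply_of, mul_inv_eq_one] <;>
    simp only [img, ← map_mul, ← map_pow]
  · exact congrArg _ (Prod.ext B4_02 rfl)
  · exact congrArg _ (Prod.ext B4_01 rfl)
  · exact congrArg _ (Prod.ext B4_12.symm rfl)
  iterate 6 exact congrArg _ (Prod.ext (by simp) (by simp))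
  · exact congrArg _ (Prod.ext (by simp) (mul_comm _ _))
  · have := star
    refine Eq.trans (congrArg _ (Prod.ext (by simp) rfl)) (this.trans
      (congrArg _ (Prod.ext rfl (by simp))))

/-- The forward map. -/
def fwd : G120 →* (B4 × Multiplicative (Fin 2 → ℤ)) ⧸ N := PresentedGroup.toGroup img_rels

theorem fwd_of (i : Fin 5) : fwd (PresentedGroup.of i) = img i := PresentedGroup.toGroup.of _

theorem G_comm {i j : Fin 5} (h : G120aux.comm (G120aux.g i) (G120aux.g j) ∈ G120rels) :
    (PresentedGroup.of i * PresentedGroup.of j : G120)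
      = PresentedGroup.of j * PresentedGroup.of i :=
  eq_of_rel (rels := G120rels) (x := FreeGroup.of i * FreeGroup.of j) (y := FreeGroup.of j * FreeGroup.of i) h

theorem G_braid {i j : Fin 5} (h : G120aux.braid (G120aux.g i) (G120aux.g j) ∈ G120rels) :
    (PresentedGroup.of i * PresentedGroup.of j * PresentedGroup.of i : G120)
      = PresentedGroup.of j * PresentedGroup.of i * PresentedGroup.of j :=
  eq_of_rel (rels := G120rels) (x := FreeGroup.of i * FreeGroup.of j * FreeGroup.of i) (y := FreeGroup.of j * FreeGroup.of i * FreeGroup.of j) h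

theorem G_star : (PresentedGroup.of 3 * PresentedGroup.of 4 : G120)
      = (PresentedGroup.of 1 * PresentedGroup.of 0 * PresentedGroup.of 2) ^ 4 :=
  eq_of_rel (rels := G120rels) (x := FreeGroup.of 3 * FreeGroup.of 4) (y := (FreeGroup.of 1 * FreeGroup.of 0 * FreeGroup.of 2) ^ 4)
    (by simp [G120rels, G120aux.g])

/-- Images of the braid generators. -/
def bimg : Fin 3 → G120 := ![PresentedGroup.of 1, PresentedGroup.of 0, PresentedGroup.of 2]

theorem bimg_rels : ∀ r ∈ B4rels, FreeGroup.lift bimg r = 1 := by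
  intro r hr
  simp only [B4rels, Set.mem_insert_iff, Set.mem_singleton_iff] at hr
  rcases hr with rfl | rfl | rfl <;>
    simp only [map_mul, map_inv, FreeGroup.lift_apply_of, mul_inv_eq_one]
  · exact G_braid (by simp [G120rels])
  · exact (G_braid (by simp [G120rels])).symm
  · exact G_comm (by simp [G120rels])

/-- The map from the braid group. -/
def beta : B4 →* G120 := PresentedGroup.toGroup bimg_rels

theorem beta_of (i : Fin 3) : beta (PresentedGroup.of i) = bimg i := PresentedGroup.toGroup.of _

theorem beta_comm (c : G120) (h : ∀ i, Commute c (bimg i)) (x : B4) : Commute c (beta x) := by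
  have : (MulAut.conj c).toMonoidHom.comp beta = beta := by
    refine PresentedGroup.ext fun i => ?_
    have := (h i).eq
    simp [beta_of, this]
  have := DFunLike.congr_fun this x
  simp only [MonoidHom.comp_apply, MulEquiv.coe_toMonoidHom, MulAut.conj_apply] at this
  exact mul_inv_eq_iff_eq_mul.mp this

theorem comm3 (x : B4) : Commute (PresentedGroup.of 3) (beta x) := by
  refine beta_comm _ (fun i => ?_) x
  fin_cases i <;> exact G_comm (by simp [G120rels])

theorem comm4 (x : B4) : Commute (PresentedGroup.of 4) (beta x) := by
  refine beta_comm _ (fun i => ?_) x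
  fin_cases i <;> exact G_comm (by simp [G120rels])

theorem comm34 : Commute (PresentedGroup.of 3 : G120) (PresentedGroup.of 4) :=
  G_comm (by simp [G120rels])

/-- The map from the free abelian group. -/
def gamma : Multiplicative (Fin 2 → ℤ) →* G120 :=
  MonoidHom.mk' (fun v => PresentedGroup.of 3 ^ (v.toAdd 0) * PresentedGroup.of 4 ^ (v.toAdd 1))
    (by
      intro v w
      simp only [toAdd_mul, Pi.add_apply, zpow_add]
      have := ((comm34.zpow_zpow (w.toAdd 0) (v.toAdd 1))).eq
      simp only [mul_assoc]
      rw [← mul_assoc (PresentedGroup.of 3 ^ _) (PresentedGroup.of 4 ^ _), this]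
      simp only [mul_assoc])

theorem gamma_apply (v : Multiplicative (Fin 2 → ℤ)) :
    gamma v = PresentedGroup.of 3 ^ (v.toAdd 0) * PresentedGroup.of 4 ^ (v.toAdd 1) := rfl

theorem gamma_u0 : gamma (u 0) = PresentedGroup.of 3 := by simp [gamma_apply, u]

theorem gamma_u1 : gamma (u 1) = PresentedGroup.of 4 := by simp [gamma_apply, u]

theorem u_decomp (v : Multiplicative (Fin 2 → ℤ)) :
    v = u 0 ^ (v.toAdd 0) * u 1 ^ (v.toAdd 1) := by
  apply Multiplicative.toAdd.injective
  funext i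
  fin_cases i <;> simp [u]

/-- The map from the product. -/
def pre : B4 × Multiplicative (Fin 2 → ℤ) →* G120 :=
  beta.noncommCoprod gamma fun x v =>
    (((comm3 x).zpow_left _).mul_left ((comm4 x).zpow_left _)).symm

theorem pre_apply (x : B4) (v : Multiplicative (Fin 2 → ℤ)) :
    pre (x, v) = beta x * gamma v := rfl

theorem N_le : N ≤ pre.ker := by
  refine Subgroup.normalClosure_le_normal ?_
  rintro _ rfl
  change pre _ = 1
  rw [pre_apply, map_inv, map_pow, map_mul, map_mul, map_mul, gamma_u0, gamma_u1, G_star,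
    beta_of, beta_of, beta_of]
  exact inv_mul_cancel _

/-- The backward map. -/
def bwd : (B4 × Multiplicative (Fin 2 → ℤ)) ⧸ N →* G120 := QuotientGroup.lift N pre N_le

theorem bwd_mk (p : B4 × Multiplicative (Fin 2 → ℤ)) : bwd (QuotientGroup.mk' N p) = pre p := rfl

theorem bwd_fwd : bwd.comp fwd = MonoidHom.id _ := by
  refine PresentedGroup.ext fun i => ?_
  rw [MonoidHom.comp_apply, fwd_of, img, bwd_mk]
  fin_cases i <;> simp [pre_apply, beta_of, bimg, gamma_u0, gamma_u1]

theorem fwd_beta : fwd.comp beta = (QuotientGroup.mk' N).comp (MonoidHom.inl _ _) := by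
  refine PresentedGroup.ext fun i => ?_
  rw [MonoidHom.comp_apply, beta_of]
  fin_cases i <;> exact fwd_of _

theorem fwd_gamma (v : Multiplicative (Fin 2 → ℤ)) :
    fwd (gamma v) = (QuotientGroup.mk' N).comp (MonoidHom.inr _ _) v := by
  conv_rhs => rw [u_decomp v]
  rw [gamma_apply, map_mul, map_zpow, map_zpow, map_mul, map_zpow, map_zpow, fwd_of, fwd_of]
  rfl

theorem fwd_bwd : fwd.comp bwd = MonoidHom.id _ := by
  refine QuotientGroup.monoidHom_ext N (MonoidHom.ext fun p => ?_)
  obtain ⟨x, v⟩ := p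
  change fwd (pre (x, v)) = QuotientGroup.mk' N (x, v)
  have h := DFunLike.congr_fun fwd_beta x
  rw [MonoidHom.comp_apply] at h
  rw [pre_apply, map_mul, h, fwd_gamma]
  simp only [MonoidHom.comp_apply, ← map_mul]
  simp

end G120proof

/-- Proposition 10: `PMod(1,2,0)` is isomorphic to `(B₄ × ℤ²)` modulo the single star
relation `c12 c21 = (a1 b a2)^4`, with `a1, b, a2` corresponding to `σ1, σ2, σ3` and
`c12, c21` to the standard basis `u₁, u₂` of `ℤ²`. -/
theorem stmt_10 :
    ∃ e : G120 ≃* (B4 × Multiplicative (Fin 2 → ℤ)) ⧸ N,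
      e (PresentedGroup.of 1) = QuotientGroup.mk' N (PresentedGroup.of 0, 1) ∧
      e (PresentedGroup.of 0) = QuotientGroup.mk' N (PresentedGroup.of 1, 1) ∧
      e (PresentedGroup.of 2) = QuotientGroup.mk' N (PresentedGroup.of 2, 1) ∧
      e (PresentedGroup.of 3) = QuotientGroup.mk' N (1, u 0) ∧
      e (PresentedGroup.of 4) = QuotientGroup.mk' N (1, u 1) := by
  exact ⟨MonoidHom.toMulEquiv G120proof.fwd G120proof.bwd G120proof.bwd_fwd G120proof.fwd_bwd,
    G120proof.fwd_of 1, G120proof.fwd_of 0, G120proof.fwd_of 2, G120proof.fwd_of 3,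
    G120proof.fwd_of 4⟩
end

section
/- The group homomorphism from the free abelian group ℤ² to G₁₂₀ sending the two standard basis elements to c12 and c21 (well defined since these two elements of G₁₂₀ commute) is injective; in particular c12 and c21 generate a free abelian subgroup of G₁₂₀ of rank 2. -/
/-- Images of the generators in the abelianization `ℤ²`. -/
def abVal : Fin 5 → Multiplicative (ℤ × ℤ) := fun i =>
  Multiplicative.ofAdd (![(1, 0), (1, 0), (1, 0), (0, 1), (12, -1)] i)

theorem abVal_rels : ∀ r ∈ G120rels, FreeGroup.lift abVal r = 1 := by
  intro r hr
  simp only [G120rels, Set.mem_insert_iff, Set.mem_singleton_iff] at hr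
  rcases hr with h | h | h | h | h | h | h | h | h | h | h <;> subst h <;>
    simp only [G120aux.comm, G120aux.braid, G120aux.g, map_mul, map_inv, map_pow,
      FreeGroup.lift_apply_of] <;> decide

/-- The map from `G120` to its abelianization. -/
def abMap : G120 →* Multiplicative (ℤ × ℤ) := PresentedGroup.toGroup abVal_rels

theorem c_comm : Commute (PresentedGroup.of 3 : G120) (PresentedGroup.of 4) := by
  have h : PresentedGroup.mk G120rels (G120aux.comm (G120aux.g 3) (G120aux.g 4)) = 1 :=
    PresentedGroup.one_of_mem (by simp [G120rels])
  simp only [G120aux.comm, G120aux.g, map_mul, map_inv] at h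
  exact mul_inv_eq_one.mp h

/-- The homomorphism from `ℤ²` to `G120`. -/
def cMap : Multiplicative (Fin 2 → ℤ) →* G120 where
  toFun v := PresentedGroup.of 3 ^ (v.toAdd 0) * PresentedGroup.of 4 ^ (v.toAdd 1)
  map_one' := by simp
  map_mul' v w := by
    have h := (c_comm.zpow_zpow (w.toAdd 0) (v.toAdd 1)).eq
    simp only [toAdd_mul, Pi.add_apply, zpow_add, mul_assoc]
    rw [← mul_assoc (PresentedGroup.of 3 ^ (w.toAdd 0)) (PresentedGroup.of 4 ^ (v.toAdd 1)), h,
      mul_assoc]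

theorem abMap_of (i : Fin 5) : abMap (PresentedGroup.of i) = abVal i :=
  PresentedGroup.toGroup.of abVal_rels

/-- Proposition 10 (second part): the homomorphism `ℤ² → PMod(1,2,0)` sending the standard
basis elements to `c12, c21` is injective, i.e. `c12, c21` generate a free abelian subgroup
of rank 2. -/
theorem stmt_12 :
    ∃ f : Multiplicative (Fin 2 → ℤ) →* G120,
      f (u 0) = PresentedGroup.of 3 ∧
      f (u 1) = PresentedGroup.of 4 ∧
      Function.Injective f := by
  refine ⟨cMap, by simp [cMap, u], by simp [cMap, u], ?_⟩
  rw [injective_iff_map_eq_one]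
  intro v hv
  have h := congrArg abMap hv
  simp only [cMap, MonoidHom.coe_mk, OneHom.coe_mk, map_mul, map_zpow, abMap_of, map_one] at h
  have h' := congrArg Multiplicative.toAdd h
  simp [abVal, Prod.ext_iff] at h'
  apply Multiplicative.toAdd.injective
  funext i
  fin_cases i
  · change v.toAdd 0 = 0
    omega
  · change v.toAdd 1 = 0
    omega
end
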